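/- Let F be a field and let f(x_1,...,x_n) = a_1 x_1^k + ... + a_n x_n^k + g(x_1,...,x_n) be a polynomial over F, where k is a positive integer with n ≥ k, a_1,...,a_n are nonzero elements of F, and g is a polynomial of total degree less than k. Then for any finite subset A of F, the restricted value set {f(x_1,...,x_n) : x_1,...,x_n ∈ A, and x_i ≠ x_j whenever i ≠ j} has cardinality at least min{p(F), |A| - n + 1}. -/

import Mathlib

/-- `p(F)`: the characteristic of `F` if positive, `+∞` if `F` has characteristic zero,
as an extended integer. -/
noncomputable def fieldCharZ (F : Type*) [Field F] : WithTop ℤ :=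
  if ringChar F = 0 then ⊤ else (ringChar F : WithTop ℤ)

/-!
Fixing all but `k` of the variables at distinct elements of `A`, which are then removed from `A`,
reduces the claim to `n = k`. Suppose that the values of `f` at injective points of `A ^ k` form
a set `T` of size `m` smaller than both `p(F)` and `|A| - k + 1`, so that `m! ≠ 0` in `F`. Then
`∏ c ∈ T, (f - c) * ∏ i < j, (x j - x i)` vanishes on `A ^ k`. Its top homogeneous part is
`(∑ i, a i * x i ^ k) ^ m` times the Vandermonde determinant, whose terms `± ∏ i, x i ^ τ i` have
exponents that are distinct modulo `k`. Hence the coefficient of `∏ i, x i ^ (k * μ i + i)` with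
`∑ i, μ i = m` comes from the identity permutation alone and equals the multinomial coefficient of
`μ` times a product of powers of the `a i`, which is nonzero. Since the `μ i` can be chosen with
`k * μ i + i < m + k`, this contradicts the Combinatorial Nullstellensatz.
-/

open Finset MvPolynomial
open scoped Nat

section Degree

variable {σ τ R : Type*} [CommSemiring R]

theorem coeff_homogeneousComponent_of_degree_eq {p : MvPolynomial σ R} {n : ℕ} {d : σ →₀ ℕ}
    (hd : d.degree = n) : coeff d (homogeneousComponent n p) = coeff d p := by
  rw [coeff_homogeneousComponent, if_pos hd]

theorem homogeneousComponent_add_mul {p q : MvPolynomial σ R} {m n : ℕ}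
    (hp : p.totalDegree ≤ m) (hq : q.totalDegree ≤ n) :
    homogeneousComponent (m + n) (p * q) =
      homogeneousComponent m p * homogeneousComponent n q := by
  classical
  have coeff_eq_zero {r : MvPolynomial σ R} {l : ℕ} (hr : r.totalDegree ≤ l) {d : σ →₀ ℕ}
      (hd : l < d.degree) : coeff d r = 0 :=
    coeff_eq_zero_of_totalDegree_lt (hr.trans_lt hd)
  ext d
  by_cases hd : d.degree = m + n
  · rw [coeff_homogeneousComponent_of_degree_eq hd, coeff_mul, coeff_mul]
    refine sum_congr rfl fun ⟨x, y⟩ hxy ↦ ?_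
    have hdeg : x.degree + y.degree = m + n := by
      rw [← map_add, mem_antidiagonal.1 hxy, hd]
    rw [coeff_homogeneousComponent, coeff_homogeneousComponent]
    rcases lt_trichotomy x.degree m with hx | hx | hx
    · simp [hx.ne, coeff_eq_zero hq (d := y) (by omega)]
    · simp [hx, show y.degree = n by omega]
    · simp [hx.ne', coeff_eq_zero hp hx]
  · rw [coeff_homogeneousComponent, if_neg hd]
    exact (((homogeneousComponent_isHomogeneous m p).mul
      (homogeneousComponent_isHomogeneous n q)).coeff_eq_zero hd).symm

theorem homogeneousComponent_sum_prod {ι : Type*} {s : Finset ι} {p : ι → MvPolynomial σ R}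
    {d : ι → ℕ} (hp : ∀ i ∈ s, (p i).totalDegree ≤ d i) :
    homogeneousComponent (∑ i ∈ s, d i) (∏ i ∈ s, p i) =
      ∏ i ∈ s, homogeneousComponent (d i) (p i) := by
  classical
  induction s using Finset.induction_on with
  | empty => simp [homogeneousComponent_zero]
  | insert i s hi ih =>
    rw [forall_mem_insert] at hp
    have hs : (∏ j ∈ s, p j).totalDegree ≤ ∑ j ∈ s, d j :=
      (totalDegree_finsetProd s p).trans (sum_le_sum hp.2)
    rw [sum_insert hi, prod_insert hi, prod_insert hi, homogeneousComponent_add_mul hp.1 hs,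
      ih hp.2]

theorem totalDegree_bind₁_le {u : σ → MvPolynomial τ R} (hu : ∀ i, (u i).totalDegree ≤ 1)
    (p : MvPolynomial σ R) : (bind₁ u p).totalDegree ≤ p.totalDegree := by
  rw [← aeval_eq_bind₁, aeval_def, eval₂_eq]
  refine totalDegree_finsetSum_le fun d hd ↦ ?_
  calc (C (coeff d p) * ∏ i ∈ d.support, u i ^ d i).totalDegree
      ≤ ∑ i ∈ d.support, (u i ^ d i).totalDegree := by
        grw [totalDegree_mul, totalDegree_C, zero_add, totalDegree_finsetProd]
    _ ≤ ∑ i ∈ d.support, d i := by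
        refine sum_le_sum fun i _ ↦ ?_
        grw [totalDegree_pow, hu i, mul_one]
    _ ≤ p.totalDegree := le_totalDegree hd

theorem exists_eval_sumElim_eq {ι : Type*} [Fintype σ] [Fintype ι] (E : σ ⊕ τ ≃ ι)
    (a : ι → R) {k : ℕ} {g : MvPolynomial ι R} (hg : g.totalDegree < k) (c : τ → R) :
    ∃ g' : MvPolynomial σ R, g'.totalDegree < k ∧ ∀ y : σ → R,
      eval (Sum.elim y c ∘ E.symm) ((∑ i, C (a i) * X i ^ k) + g) =
        eval y ((∑ j, C (a (E (.inl j))) * X j ^ k) + g') := by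
  have : Fintype τ := .ofInjective (E ∘ .inr) (E.injective.comp Sum.inr_injective)
  let u (i : ι) : MvPolynomial σ R := Sum.elim X (fun t ↦ C (c t)) (E.symm i)
  have hu_deg (i : ι) : (u i).totalDegree ≤ 1 := by
    rcases h : E.symm i with j | t
    · simpa [u, h] using (isHomogeneous_X R j).totalDegree_le
    · simp [u, h]
  have hu_eval (y : σ → R) : Sum.elim y c ∘ E.symm = fun i ↦ eval y (u i) := by
    ext i
    rcases h : E.symm i <;> simp [u, h]
  refine ⟨C (∑ t, a (E (.inr t)) * c t ^ k) + bind₁ u g, ?_, fun y ↦ ?_⟩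
  · refine (totalDegree_add _ _).trans_lt (max_lt ?_ ((totalDegree_bind₁_le hu_deg g).trans_lt hg))
    rw [totalDegree_C]
    exact Nat.zero_lt_of_lt hg
  · have hg_eval : eval y (bind₁ u g) = eval (Sum.elim y c ∘ E.symm) g := by
      rw [hu_eval]
      exact eval₂Hom_bind₁ _ _ _ _
    rw [← E.sum_comp, Fintype.sum_sum_type]
    simp [hg_eval, add_assoc]

theorem isHomogeneous_sum_C_mul_X_pow [Fintype σ] (a : σ → R) (k : ℕ) :
    (∑ i, C (a i) * X i ^ k : MvPolynomial σ R).IsHomogeneous k :=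
  .sum _ _ _ fun i _ ↦ isHomogeneous_C_mul_X_pow (a i) i k

theorem totalDegree_add_le_of_isHomogeneous {h g : MvPolynomial σ R} {k : ℕ}
    (hh : h.IsHomogeneous k) (hg : g.totalDegree ≤ k) : (h + g).totalDegree ≤ k :=
  (totalDegree_add _ _).trans (max_le hh.totalDegree_le hg)

end Degree

section Coefficients

variable {σ R : Type*} [CommSemiring R]

theorem natCast_factorial_ne_zero [NoZeroDivisors R] [Nontrivial R] {m : ℕ}
    (hm : ringChar R = 0 ∨ m < ringChar R) : (m ! : R) ≠ 0 := by
  rw [Ne, ringChar.spec]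
  rcases CharP.char_is_prime_or_zero R (ringChar R) with hp | hp
  · rw [hp.dvd_factorial, not_le]
    exact hm.resolve_left hp.ne_zero
  · rw [hp, zero_dvd_iff]
    exact m.factorial_ne_zero

theorem natCast_multinomial_ne_zero {d : σ →₀ ℕ} (hd : (d.degree ! : R) ≠ 0) :
    (d.multinomial : R) ≠ 0 := by
  rw [Finsupp.degree_apply, ← Nat.multinomial_spec, ← Finsupp.multinomial_eq, Nat.cast_mul] at hd
  exact right_ne_zero_of_mul hd

theorem coeff_sum_smul_X_pow_ne_zero [NoZeroDivisors R] [Fintype σ] {a : σ → R}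
    (ha : ∀ i, a i ≠ 0) {d : σ →₀ ℕ} (hd : (d.degree ! : R) ≠ 0) :
    coeff d ((∑ i, a i • X i : MvPolynomial σ R) ^ d.degree) ≠ 0 := by
  have : Nontrivial R := ⟨_, _, hd⟩
  rw [coeff_linearCombination_X_pow_of_fintype,
    if_pos (show d.sum (fun _ e ↦ e) = d.degree from rfl)]
  exact mul_ne_zero (natCast_multinomial_ne_zero hd)
    (prod_ne_zero_iff.2 fun i _ ↦ pow_ne_zero _ (ha i))

theorem coeff_smul_add_expand_mul_monomial_of_ne {k : ℕ} {r s : σ →₀ ℕ} (hr : ∀ i, r i < k)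
    (hs : ∀ i, s i < k) (hrs : r ≠ s) (μ : σ →₀ ℕ) (q : MvPolynomial σ R) (c : R) :
    coeff (k • μ + r) (expand k q * monomial s c) = 0 := by
  rw [coeff_mul_monomial']
  split_ifs with hle
  · obtain ⟨i, hi⟩ := Finsupp.ne_iff.1 hrs
    have hndvd : ¬ k ∣ (k • μ + r - s) i := fun hdvd ↦ by
      have hmod : s i ≡ k * μ i + r i [MOD k] := (Nat.modEq_iff_dvd' (hle i)).2 hdvd
      have hmod' : k * μ i + r i ≡ r i [MOD k] := by simp [Nat.ModEq]
      exact hi ((hmod.trans hmod').eq_of_lt_of_lt (hs i) (hr i)).symm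
    rw [coeff_expand_of_not_dvd q hndvd, zero_mul]
  · rfl

end Coefficients

section Vandermonde

variable {k : ℕ} {R : Type*} [CommRing R]

/-- The exponent of the monomial `∏ i, X i ^ τ i`, which is the term of the Vandermonde determinant
belonging to the permutation `τ`. -/
noncomputable def permExponent (τ : Equiv.Perm (Fin k)) : Fin k →₀ ℕ :=
  Finsupp.equivFunOnFinite.symm fun i ↦ τ i

@[simp]
theorem permExponent_apply (τ : Equiv.Perm (Fin k)) (i : Fin k) : permExponent τ i = τ i := rfl

theorem permExponent_injective : Function.Injective (permExponent (k := k)) :=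
  fun _ _ h ↦ Equiv.ext fun i ↦ Fin.ext (DFunLike.congr_fun h i)

theorem degree_permExponent (τ : Equiv.Perm (Fin k)) :
    (permExponent τ).degree = ∑ i : Fin k, (i : ℕ) := by
  rw [Finsupp.degree_eq_sum]
  exact Equiv.sum_comp τ fun i : Fin k ↦ (i : ℕ)

theorem degree_smul_add_permExponent (μ : Fin k →₀ ℕ) (τ : Equiv.Perm (Fin k)) :
    (k • μ + permExponent τ).degree = μ.degree * k + ∑ i : Fin k, (i : ℕ) := by
  rw [map_add, map_nsmul, degree_permExponent, smul_eq_mul, mul_comm]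

theorem det_vandermonde_X :
    (Matrix.vandermonde (X : Fin k → MvPolynomial (Fin k) R)).det =
      ∑ τ : Equiv.Perm (Fin k), monomial (permExponent τ) ((Equiv.Perm.sign τ : ℤ) : R) := by
  rw [← Matrix.det_transpose, Matrix.det_apply']
  refine sum_congr rfl fun τ _ ↦ ?_
  rw [monomial_eq, Finsupp.prod_fintype _ _ fun _ ↦ pow_zero _]
  simp [Matrix.vandermonde_apply]

theorem isHomogeneous_det_vandermonde_X :
    (Matrix.vandermonde (X : Fin k → MvPolynomial (Fin k) R)).det.IsHomogeneous
      (∑ i : Fin k, (i : ℕ)) := by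
  rw [det_vandermonde_X]
  exact .sum _ _ _ fun τ _ ↦ isHomogeneous_monomial _ (degree_permExponent τ)

theorem coeff_expand_mul_det_vandermonde_X (hk : k ≠ 0) (μ : Fin k →₀ ℕ)
    (q : MvPolynomial (Fin k) R) :
    coeff (k • μ + permExponent 1)
      (expand k q * (Matrix.vandermonde (X : Fin k → MvPolynomial (Fin k) R)).det) =
        coeff μ q := by
  have hlt (τ : Equiv.Perm (Fin k)) (i : Fin k) : permExponent τ i < k := (τ i).isLt
  rw [det_vandermonde_X, mul_sum, coeff_sum, Fintype.sum_eq_single 1 fun τ hτ ↦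
    coeff_smul_add_expand_mul_monomial_of_ne (hlt 1) (hlt τ)
      (permExponent_injective.ne hτ.symm) μ q _, coeff_mul_monomial, coeff_expand_smul k hk]
  simp

theorem injective_of_eval_det_vandermonde_X_ne_zero [IsDomain R] {x : Fin k → R}
    (hx : eval x (Matrix.vandermonde X).det ≠ 0) : Function.Injective x := by
  rw [← Matrix.det_vandermonde_ne_zero_iff]
  convert hx
  rw [RingHom.map_det]
  congr 1
  ext i j
  simp [Matrix.vandermonde_apply]

end Vandermonde

theorem sum_range_add_div (m : ℕ) {k : ℕ} (hk : 0 < k) : ∑ i ∈ range k, (m + i) / k = m := by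
  induction m with
  | zero => exact sum_eq_zero fun i hi ↦ by simpa using Nat.div_eq_of_lt (mem_range.1 hi)
  | succ m ih =>
    have hshift := (sum_range_succ' (fun i ↦ (m + i) / k) k).symm.trans (sum_range_succ _ k)
    simp only [ih, add_zero, Nat.add_div_right m hk] at hshift
    simp only [add_assoc, add_comm 1]
    omega

theorem exists_degree_eq_and_mul_add_lt (m : ℕ) {k : ℕ} (hk : 0 < k) :
    ∃ μ : Fin k →₀ ℕ, μ.degree = m ∧ ∀ i, k * μ i + i < m + k := by
  refine ⟨Finsupp.equivFunOnFinite.symm fun i ↦ (m + i.rev) / k, ?_, fun i ↦ ?_⟩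
  · rw [Finsupp.degree_eq_sum]
    calc ∑ i : Fin k, (m + i.rev) / k
        = ∑ i : Fin k, (m + i) / k := Equiv.sum_comp Fin.revPerm fun i : Fin k ↦ (m + i) / k
      _ = m := by rw [Fin.sum_univ_eq_sum_range (fun i ↦ (m + i) / k), sum_range_add_div m hk]
  · have hle : k * ((m + i.rev) / k) ≤ m + i.rev := Nat.mul_div_le _ _
    have hrev := Fin.val_rev i
    simp only [Finsupp.equivFunOnFinite_symm_apply_apply]
    omega

section TopCoefficient

variable {R : Type*} [CommRing R] {k : ℕ}

theorem totalDegree_prod_sub_C_le {σ : Type*} {p : MvPolynomial σ R} (hp : p.totalDegree ≤ k)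
    (T : Finset R) : (∏ c ∈ T, (p - C c)).totalDegree ≤ #T * k := by
  refine (totalDegree_finsetProd _ _).trans (sum_le_card_nsmul _ _ _ fun c _ ↦ ?_)
  exact (totalDegree_sub_C_le p c).trans hp

theorem homogeneousComponent_prod_sub_C {σ : Type*} {h g : MvPolynomial σ R}
    (hh : h.IsHomogeneous k) (hg : g.totalDegree < k) (T : Finset R) :
    homogeneousComponent (#T * k) (∏ c ∈ T, (h + g - C c)) = h ^ #T := by
  have hlow (c : R) : (g - C c).totalDegree < k := (totalDegree_sub_C_le g c).trans_lt hg
  have htop (c : R) : homogeneousComponent k (h + g - C c) = h := by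
    rw [add_sub_assoc, map_add, homogeneousComponent_eq_self hh,
      homogeneousComponent_eq_zero k _ (hlow c), add_zero]
  have hdeg (c : R) : (h + g - C c).totalDegree ≤ k := by
    rw [add_sub_assoc]
    exact totalDegree_add_le_of_isHomogeneous hh (hlow c).le
  rw [← smul_eq_mul, ← sum_const, homogeneousComponent_sum_prod fun c _ ↦ hdeg c,
    prod_congr rfl fun c _ ↦ htop c, prod_const]

theorem coeff_prod_sub_C_mul_det_vandermonde_X_ne_zero [NoZeroDivisors R] {a : Fin k → R}
    (ha : ∀ i, a i ≠ 0) {g : MvPolynomial (Fin k) R} (hg : g.totalDegree < k) {T : Finset R}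
    (hT : ((#T)! : R) ≠ 0) {μ : Fin k →₀ ℕ} (hμ : μ.degree = #T) :
    coeff (k • μ + permExponent 1) ((∏ c ∈ T, ((∑ i, C (a i) * X i ^ k) + g - C c)) *
      (Matrix.vandermonde X).det) ≠ 0 := by
  set h : MvPolynomial (Fin k) R := ∑ i, C (a i) * X i ^ k with h_def
  have hh : h.IsHomogeneous k := isHomogeneous_sum_C_mul_X_pow a k
  have hh_expand : h ^ #T = expand k ((∑ i, a i • X i) ^ #T) := by simp [h_def, smul_eq_C_mul]
  have hfdeg : (h + g).totalDegree ≤ k := totalDegree_add_le_of_isHomogeneous hh hg.le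
  have hdeg : (k • μ + permExponent 1).degree = #T * k + ∑ i : Fin k, (i : ℕ) :=
    hμ ▸ degree_smul_add_permExponent μ 1
  have htop : homogeneousComponent (#T * k + ∑ i : Fin k, (i : ℕ))
      ((∏ c ∈ T, (h + g - C c)) * (Matrix.vandermonde X).det) =
        expand k ((∑ i, a i • X i) ^ #T) * (Matrix.vandermonde X).det := by
    rw [homogeneousComponent_add_mul (totalDegree_prod_sub_C_le hfdeg T)
        isHomogeneous_det_vandermonde_X.totalDegree_le, homogeneousComponent_prod_sub_C hh hg,
      homogeneousComponent_eq_self isHomogeneous_det_vandermonde_X, hh_expand]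
  rw [← coeff_homogeneousComponent_of_degree_eq hdeg, htop,
    coeff_expand_mul_det_vandermonde_X (Nat.ne_zero_of_lt hg), ← hμ]
  exact coeff_sum_smul_X_pow_ne_zero ha (hμ ▸ hT)

end TopCoefficient

section RestrictedValues

variable {R : Type*} [CommRing R] [IsDomain R] {k : ℕ}

theorem exists_injective_eval_notMem_of_fin {a : Fin k → R} (ha : ∀ i, a i ≠ 0)
    {g : MvPolynomial (Fin k) R} (hg : g.totalDegree < k) {A T : Finset R}
    (hT : ((#T)! : R) ≠ 0) (hTA : #T + k ≤ #A) :
    ∃ x : Fin k → R, (∀ i, x i ∈ A) ∧ Function.Injective x ∧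
      eval x ((∑ i, C (a i) * X i ^ k) + g) ∉ T := by
  set f : MvPolynomial (Fin k) R := (∑ i, C (a i) * X i ^ k) + g with hf
  have hfdeg : f.totalDegree ≤ k :=
    totalDegree_add_le_of_isHomogeneous (isHomogeneous_sum_C_mul_X_pow a k) hg.le
  obtain ⟨μ, hμ, hμ_lt⟩ := exists_degree_eq_and_mul_add_lt #T (Nat.zero_lt_of_lt hg)
  have hcoeff := coeff_prod_sub_C_mul_det_vandermonde_X_ne_zero ha hg hT hμ
  rw [← hf] at hcoeff
  have hdeg : ((∏ c ∈ T, (f - C c)) * (Matrix.vandermonde X).det).totalDegree =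
      (k • μ + permExponent 1).degree := by
    refine le_antisymm ?_ (le_totalDegree (mem_support_iff.2 hcoeff))
    rw [degree_smul_add_permExponent, hμ]
    grw [totalDegree_mul, totalDegree_prod_sub_C_le hfdeg,
      isHomogeneous_det_vandermonde_X.totalDegree_le]
  obtain ⟨x, hxA, hx⟩ := combinatorial_nullstellensatz_exists_eval_nonzero _ _ hcoeff hdeg
    (fun _ ↦ A) fun i ↦ (hμ_lt i).trans_le hTA
  rw [map_mul, map_prod] at hx
  refine ⟨x, hxA, injective_of_eval_det_vandermonde_X_ne_zero (right_ne_zero_of_mul hx),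
    fun hxT ↦ left_ne_zero_of_mul hx (prod_eq_zero hxT ?_)⟩
  rw [map_sub, eval_C, sub_self]

theorem exists_injective_eval_notMem_of_equiv {ι τ : Type*} [Fintype ι] (E : Fin k ⊕ τ ≃ ι)
    {a : ι → R} (ha : ∀ j, a (E (.inl j)) ≠ 0) {g : MvPolynomial ι R} (hg : g.totalDegree < k)
    {A T : Finset R} (hT : ((#T)! : R) ≠ 0) (hTA : #T + Fintype.card ι ≤ #A) :
    ∃ x : ι → R, (∀ i, x i ∈ A) ∧ Function.Injective x ∧
      eval x ((∑ i, C (a i) * X i ^ k) + g) ∉ T := by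
  classical
  have : Fintype τ := .ofInjective (E ∘ .inr) (E.injective.comp Sum.inr_injective)
  have hcard : Fintype.card ι = k + Fintype.card τ := by
    rw [← Fintype.card_congr E, Fintype.card_sum, Fintype.card_fin]
  obtain ⟨c⟩ : Nonempty (τ ↪ A) :=
    Function.Embedding.nonempty_of_card_le (by rw [Fintype.card_coe]; omega)
  let c' : τ ↪ R := c.trans (.subtype _)
  have hc'A (t : τ) : c' t ∈ A := (c t).2
  obtain ⟨g', hg', heval⟩ := exists_eval_sumElim_eq E a hg c'
  have hA' : #T + k ≤ #(A \ univ.map c') := by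
    have hle := le_card_sdiff (univ.map c') A
    rw [card_map, card_univ] at hle
    omega
  obtain ⟨y, hyA, hy, hyT⟩ := exists_injective_eval_notMem_of_fin ha hg' hT hA'
  refine ⟨Sum.elim y c' ∘ E.symm, fun i ↦ ?_,
    .comp (hy.sumElim c'.injective fun j t hjt ↦ ?_) E.symm.injective, heval y ▸ hyT⟩
  · rcases h : E.symm i with j | t
    · simpa [h] using (mem_sdiff.1 (hyA j)).1
    · simpa [h] using hc'A t
  · exact (mem_sdiff.1 (hyA j)).2 (mem_map.2 ⟨t, mem_univ t, hjt.symm⟩)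

theorem exists_injective_eval_notMem {ι : Type*} [Fintype ι] {a : ι → R}
    (ha : k ≤ (Function.support a).ncard) {g : MvPolynomial ι R} (hg : g.totalDegree < k)
    {A T : Finset R} (hT : ((#T)! : R) ≠ 0) (hTA : #T + Fintype.card ι ≤ #A) :
    ∃ x : ι → R, (∀ i, x i ∈ A) ∧ Function.Injective x ∧
      eval x ((∑ i, C (a i) * X i ^ k) + g) ∉ T := by
  classical
  obtain ⟨e⟩ : Nonempty (Fin k ↪ Function.support a) :=
    Function.Embedding.nonempty_of_card_le (by
      rwa [Fintype.card_fin, ← Nat.card_eq_fintype_card, Nat.card_coe_set_eq])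
  let e' : Fin k ↪ ι := e.trans (.subtype _)
  exact exists_injective_eval_notMem_of_equiv
    ((Equiv.sumCongr (Equiv.ofInjective e' e'.injective) (.refl _)).trans (Equiv.Set.sumCompl _))
    (fun j ↦ (e j).2) hg hT hTA

theorem stmt7_general {ι : Type*} [Fintype ι] {a : ι → R}
    (ha : k ≤ (Function.support a).ncard) {g : MvPolynomial ι R} (hg : g.totalDegree < k)
    (A : Finset R) {m : ℕ} (hm : ringChar R = 0 ∨ m ≤ ringChar R)
    (hmA : m + Fintype.card ι ≤ #A + 1) :
    m ≤ {y | ∃ x : ι → R, (∀ i, x i ∈ A) ∧ Function.Injective x ∧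
      eval x ((∑ i, C (a i) * X i ^ k) + g) = y}.ncard := by
  set Y := {y | ∃ x : ι → R, (∀ i, x i ∈ A) ∧ Function.Injective x ∧
    eval x ((∑ i, C (a i) * X i ^ k) + g) = y}
  have hY : Y.Finite := by
    refine ((Set.Finite.pi' fun _ : ι ↦ A.finite_toSet).image
      fun x ↦ eval x ((∑ i, C (a i) * X i ^ k) + g)).subset ?_
    rintro y ⟨x, hxA, -, rfl⟩
    exact ⟨x, hxA, rfl⟩
  by_contra! hlt
  rw [Set.ncard_eq_toFinset_card Y hY] at hlt
  obtain ⟨x, hxA, hx, hxY⟩ := exists_injective_eval_notMem ha hg (A := A) (T := hY.toFinset)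
    (natCast_factorial_ne_zero (hm.imp_right hlt.trans_le)) (by omega)
  exact hxY (hY.mem_toFinset.2 ⟨x, hxA, hx, rfl⟩)

end RestrictedValues

theorem min_fieldCharZ_le {F : Type*} [Field F] {z : ℤ} {N : ℕ}
    (h : ∀ m : ℕ, ringChar F = 0 ∨ m ≤ ringChar F → m ≤ z → m ≤ N) :
    min (fieldCharZ F) z ≤ ((N : ℤ) : WithTop ℤ) := by
  by_contra! hlt
  obtain ⟨hchar, hz⟩ := lt_min_iff.1 hlt
  refine (Nat.lt_succ_self N).not_ge (h (N + 1) ?_ ?_)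
  · by_contra! hm
    rw [fieldCharZ, if_neg hm.1] at hchar
    have : N < ringChar F := by exact_mod_cast hchar
    omega
  · have : (N : ℤ) < z := WithTop.coe_lt_coe.1 hz
    omega

theorem stmt7 {F : Type*} [Field F] (n k : ℕ) (hk : 0 < k) (hnk : k ≤ n)
    (a : Fin n → F) (ha : ∀ i, a i ≠ 0)
    (g f : MvPolynomial (Fin n) F) (hg : g.totalDegree < k)
    (hf : f = (∑ i, MvPolynomial.C (a i) * MvPolynomial.X i ^ k) + g)
    (A : Finset F) :
    min (fieldCharZ F) (((A.card : ℤ) - (n : ℤ) + 1 : ℤ) : WithTop ℤ)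
      ≤ ((({y | ∃ x : Fin n → F, (∀ i, x i ∈ A) ∧ Function.Injective x ∧
            MvPolynomial.eval x f = y} : Set F).ncard : ℤ) : WithTop ℤ) := by
  have hsupp : k ≤ (Function.support a).ncard := by
    simpa [Function.support_eq_univ ha, Set.ncard_univ] using hnk
  subst hf
  exact min_fieldCharZ_le fun m hm hmA ↦ stmt7_general hsupp hg A hm (by
    rw [Fintype.card_fin]; omega)
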